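/- For all natural numbers n and m, the complex Clifford algebra Cℂ(n+2m) is isomorphic as a ℂ-algebra to the matrix algebra Matrix (Fin (2^m)) (Fin (2^m)) (Cℂ(n)) of 2^m × 2^m matrices with entries in Cℂ(n). -/

import Mathlib

/-- `Cℂ(n)`: the Clifford algebra over `ℂ` of the sum-of-squares form on `Fin n → ℂ`. -/
noncomputable abbrev ComplexClifford (n : ℕ) :=
  CliffordAlgebra (QuadraticMap.weightedSumSquares ℂ (fun _ : Fin n => (1 : ℂ)))

/-!
Over any commutative ring, adding a hyperbolic plane `H(a, b) = a * b` to a quadratic form `Q`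
turns the Clifford algebra of `Q` into its algebra of `2 × 2` matrices: `(x, a, b)` is sent to
`!![x, a; b, -x]`, whose square is the scalar `Q x + a * b`. Conversely, the standard basis `e, f`
of `H` generates a system of matrix units `e * f, e, f, f * e`, and the vectors `x`, which
anticommute with `e` and `f`, are made to commute with them by multiplication with
`u = e * f - f * e`, an involution anticommuting with `e` and `f`.

If `2` is invertible and `i ^ 2 = -1`, then `a ^ 2 + b ^ 2 = (a + i * b) * (a - i * b)`, so two
additional squares are a hyperbolic plane.
-/

open CliffordAlgebra Matrix QuadraticMap

section MatrixUnits

variable {n R A B : Type*} [Fintype n] [DecidableEq n] [CommSemiring R] [Semiring A] [Semiring B]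
  [Algebra R A] [Algebra R B]

/-- The algebra homomorphism out of `Matrix n n A` induced by an algebra homomorphism `φ` on the
scalars and a system of matrix units `E` commuting with the image of `φ`. -/
def matrixUnitsLift (φ : A →ₐ[R] B) (E : n → n → B) (hφE : ∀ a i j, Commute (E i j) (φ a))
    (hE : ∀ i j k l, E i j * E k l = if j = k then E i l else 0) (hE_one : ∑ i, E i i = 1) :
    Matrix n n A →ₐ[R] B :=
  AlgHom.ofLinearMap
    (liftLinear R fun i j => LinearMap.mulRight R (E i j) ∘ₗ φ.toLinearMap)
    (by simp [liftLinear_apply, one_apply, apply_ite φ, ite_mul, hE_one])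
    (by
      have mul_units (a b : A) (i j k l : n) :
          φ a * E i j * (φ b * E k l) = if j = k then φ (a * b) * E i l else 0 := by
        rw [(hφE b i j).mul_mul_mul_comm, hE, map_mul, mul_ite, mul_zero]
      refine LinearMap.map_mul_iff _ |>.mpr <| ext_linearMap R fun i j => LinearMap.ext fun a =>
        ext_linearMap R fun k l => LinearMap.ext fun b => ?_
      obtain rfl | hjk := eq_or_ne j k <;> simp [*])

theorem matrixUnitsLift_apply (φ : A →ₐ[R] B) (E : n → n → B)
    (hφE : ∀ a i j, Commute (E i j) (φ a))
    (hE : ∀ i j k l, E i j * E k l = if j = k then E i l else 0) (hE_one : ∑ i, E i i = 1)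
    (M : Matrix n n A) : matrixUnitsLift φ E hφE hE hE_one M = ∑ i, ∑ j, φ (M i j) * E i j :=
  liftLinear_apply R _ M

end MatrixUnits

/-- The identification of `1 × 1` matrices with scalars. Unlike `Matrix.uniqueAlgEquiv`, it is
stated for the canonical `Fintype (Fin 1)` instance. -/
def matrixFinOneAlgEquiv {R A : Type*} [CommSemiring R] [Semiring A] [Algebra R A] :
    Matrix (Fin 1) (Fin 1) A ≃ₐ[R] A :=
  .ofLinearEquiv uniqueLinearEquiv rfl (by simp [mul_apply])

/-- A hyperbolic pair in a ring: two elements satisfying the relations of the standard basis of a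
hyperbolic plane in its Clifford algebra. -/
structure IsHyperbolicPair {B : Type*} [Ring B] (e f : B) : Prop where
  left_mul_self : e * e = 0
  right_mul_self : f * f = 0
  mul_add_mul_swap : e * f + f * e = 1

namespace IsHyperbolicPair

variable {B : Type*} [Ring B] {e f : B}

/-- The matrix units `!![e * f, e; f, f * e]` generated by a hyperbolic pair `e`, `f`. -/
def matrixUnits (e f : B) : Fin 2 → Fin 2 → B := ![![e * f, e], ![f, f * e]]

/-- The element `e * f - f * e` attached to a hyperbolic pair `e`, `f`, corresponding to the matrix
`!![1, 0; 0, -1]`. -/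
def chirality (e f : B) : B := e * f - f * e

theorem symm (h : IsHyperbolicPair e f) : IsHyperbolicPair f e :=
  ⟨h.right_mul_self, h.left_mul_self, add_comm (e * f) _ ▸ h.mul_add_mul_swap⟩

theorem mul_mul_self (h : IsHyperbolicPair e f) : e * f * e = e := by
  rw [eq_sub_of_add_eq h.mul_add_mul_swap, sub_mul, one_mul, mul_assoc, h.left_mul_self, mul_zero,
    sub_zero]

theorem matrixUnits_mul_matrixUnits (h : IsHyperbolicPair e f) (i j k l : Fin 2) :
    matrixUnits e f i j * matrixUnits e f k l = if j = k then matrixUnits e f i l else 0 := by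
  have mul_left_mul_left (x : B) : x * e * e = 0 := by rw [mul_assoc, h.left_mul_self, mul_zero]
  have mul_right_mul_right (x : B) : x * f * f = 0 := by
    rw [mul_assoc, h.right_mul_self, mul_zero]
  fin_cases i <;> fin_cases j <;> fin_cases k <;> fin_cases l <;>
    simp [matrixUnits, ← mul_assoc, h.left_mul_self, h.right_mul_self, h.mul_mul_self,
      h.symm.mul_mul_self, mul_left_mul_left, mul_right_mul_right]

theorem sum_matrixUnits_diag (h : IsHyperbolicPair e f) : ∑ i, matrixUnits e f i i = 1 := by
  simpa [matrixUnits] using h.mul_add_mul_swap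

theorem chirality_swap (e f : B) : chirality f e = -chirality e f :=
  (neg_sub _ _).symm

theorem left_mul_chirality (h : IsHyperbolicPair e f) : e * chirality e f = -e := by
  rw [chirality, mul_sub, ← mul_assoc, ← mul_assoc, h.left_mul_self, h.mul_mul_self, zero_mul,
    zero_sub]

theorem right_mul_chirality (h : IsHyperbolicPair e f) : f * chirality e f = f := by
  simpa [chirality_swap e f] using h.symm.left_mul_chirality

theorem chirality_mul_left (h : IsHyperbolicPair e f) : chirality e f * e = e := by
  rw [chirality, sub_mul, mul_assoc f, h.left_mul_self, h.mul_mul_self, mul_zero, sub_zero]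

theorem chirality_mul_right (h : IsHyperbolicPair e f) : chirality e f * f = -f := by
  rw [← neg_eq_iff_eq_neg, ← neg_mul, ← chirality_swap, h.symm.chirality_mul_left]

theorem chirality_mul_self (h : IsHyperbolicPair e f) : chirality e f * chirality e f = 1 := by
  calc chirality e f * chirality e f
      = e * (f * chirality e f) - f * (e * chirality e f) := by
        rw [← mul_assoc, ← mul_assoc, ← sub_mul, ← chirality]
    _ = 1 := by
        rw [h.right_mul_chirality, h.left_mul_chirality, mul_neg, sub_neg_eq_add,
          h.mul_add_mul_swap]

theorem commute_chirality {x : B} (hxe : x * e = -(e * x)) (hxf : x * f = -(f * x)) :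
    Commute x (chirality e f) := by
  have comm_mul {a b : B} (ha : x * a = -(a * x)) (hb : x * b = -(b * x)) : Commute x (a * b) := by
    rw [commute_iff_eq, ← mul_assoc, ha, neg_mul, mul_assoc, hb, mul_neg, neg_neg, mul_assoc]
  exact (comm_mul hxe hxf).sub_right (comm_mul hxf hxe)

theorem commute_matrixUnits {a : B} (he : Commute e a) (hf : Commute f a) (i j : Fin 2) :
    Commute (matrixUnits e f i j) a := by
  fin_cases i <;> fin_cases j
  exacts [he.mul_left hf, he, hf, hf.mul_left he]

end IsHyperbolicPair

theorem commute_of_commute_ι {R M A : Type*} [CommRing R] [AddCommGroup M]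
    [Module R M] [Semiring A] [Algebra R A] {Q : QuadraticForm R M} (φ : CliffordAlgebra Q →ₐ[R] A)
    {c : A} (h : ∀ x, Commute c (φ (ι Q x))) (a : CliffordAlgebra Q) : Commute c (φ a) := by
  induction a using CliffordAlgebra.induction with
  | algebraMap r => simpa only [AlgHom.commutes] using (Algebra.commute_algebraMap_right r c)
  | ι x => exact h x
  | mul a b ha hb => simpa only [map_mul] using ha.mul_right hb
  | add a b ha hb => simpa only [map_add] using ha.add_right hb

section HyperbolicPlane

open IsHyperbolicPair

variable {R M : Type*} [CommRing R] [AddCommGroup M] [Module R M]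

variable (R) in
/-- The hyperbolic plane `(a, b) ↦ a * b`. -/
def hyperbolicPlane : QuadraticForm R (R × R) :=
  linMulLin (LinearMap.fst R R R) (LinearMap.snd R R R)

@[simp]
theorem hyperbolicPlane_apply (v : R × R) : hyperbolicPlane R v = v.1 * v.2 :=
  rfl

variable (Q : QuadraticForm R M)

/-- The form `(x, a, b) ↦ Q x + a * b`, the orthogonal sum of `Q` and a hyperbolic plane. -/
abbrev prodHyperbolicPlane : QuadraticForm R (M × R × R) :=
  Q.prod (hyperbolicPlane R)

/-- The Clifford generator of the first basis vector of the hyperbolic plane added to `Q`. -/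
abbrev hyperbolicLeft : CliffordAlgebra (prodHyperbolicPlane Q) :=
  ι _ (0, 1, 0)

/-- The Clifford generator of the second basis vector of the hyperbolic plane added to `Q`. -/
abbrev hyperbolicRight : CliffordAlgebra (prodHyperbolicPlane Q) :=
  ι _ (0, 0, 1)

theorem isHyperbolicPair_left_right : IsHyperbolicPair (hyperbolicLeft Q) (hyperbolicRight Q) where
  left_mul_self := by simp [ι_sq_scalar]
  right_mul_self := by simp [ι_sq_scalar]
  mul_add_mul_swap := by simp [ι_mul_ι_add_swap, polar]

theorem ι_inl_mul_ι_inr (x : M) (w : R × R) :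
    ι (prodHyperbolicPlane Q) (x, 0) * ι _ (0, w) = -(ι _ (0, w) * ι _ (x, 0)) :=
  ι_mul_ι_comm_of_isOrtho (.inl_inr x w)

/-- The chirality of the hyperbolic plane added to `Q`. -/
abbrev hyperbolicChirality : CliffordAlgebra (prodHyperbolicPlane Q) :=
  chirality (hyperbolicLeft Q) (hyperbolicRight Q)

theorem commute_ι_inl_hyperbolicChirality (x : M) :
    Commute (ι (prodHyperbolicPlane Q) (x, 0)) (hyperbolicChirality Q) :=
  commute_chirality (ι_inl_mul_ι_inr Q x _) (ι_inl_mul_ι_inr Q x _)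

/-- The embedding of the Clifford algebra of `Q` into the centralizer of the hyperbolic plane added
to `Q`: the generator of `x` is multiplied by the chirality. -/
def cliffordTwist : CliffordAlgebra Q →ₐ[R] CliffordAlgebra (prodHyperbolicPlane Q) :=
  lift Q ⟨LinearMap.mulRight R (hyperbolicChirality Q) ∘ₗ ι _ ∘ₗ LinearMap.inl R M (R × R), by
    intro x
    simp [(commute_ι_inl_hyperbolicChirality Q x).symm.mul_mul_mul_comm,
      (isHyperbolicPair_left_right Q).chirality_mul_self, ι_sq_scalar]⟩

theorem cliffordTwist_ι (x : M) :
    cliffordTwist Q (ι Q x) = ι _ (x, 0) * hyperbolicChirality Q := by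
  simp [cliffordTwist]

theorem commute_hyperbolicLeft_cliffordTwist (a : CliffordAlgebra Q) :
    Commute (hyperbolicLeft Q) (cliffordTwist Q a) := by
  refine commute_of_commute_ι _ (fun x => ?_) a
  have h := isHyperbolicPair_left_right Q
  rw [commute_iff_eq, cliffordTwist_ι, mul_assoc, h.chirality_mul_left, ι_inl_mul_ι_inr,
    (commute_ι_inl_hyperbolicChirality Q x).eq, ← mul_assoc, h.left_mul_chirality, neg_mul]

theorem commute_hyperbolicRight_cliffordTwist (a : CliffordAlgebra Q) :
    Commute (hyperbolicRight Q) (cliffordTwist Q a) := by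
  refine commute_of_commute_ι _ (fun x => ?_) a
  have h := isHyperbolicPair_left_right Q
  rw [commute_iff_eq, cliffordTwist_ι, mul_assoc, h.chirality_mul_right, mul_neg, ι_inl_mul_ι_inr,
    neg_neg, (commute_ι_inl_hyperbolicChirality Q x).eq, ← mul_assoc, h.right_mul_chirality]

/-- The homomorphism from matrices over the Clifford algebra of `Q` which embeds the entries by
`cliffordTwist` and sends the matrix units to those of the hyperbolic plane. -/
def matrixToClifford :
    Matrix (Fin 2) (Fin 2) (CliffordAlgebra Q) →ₐ[R] CliffordAlgebra (prodHyperbolicPlane Q) :=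
  let h := isHyperbolicPair_left_right Q
  matrixUnitsLift (cliffordTwist Q) (matrixUnits (hyperbolicLeft Q) (hyperbolicRight Q))
    (fun a => commute_matrixUnits (commute_hyperbolicLeft_cliffordTwist Q a)
      (commute_hyperbolicRight_cliffordTwist Q a))
    h.matrixUnits_mul_matrixUnits h.sum_matrixUnits_diag

theorem matrixToClifford_apply (A : Matrix (Fin 2) (Fin 2) (CliffordAlgebra Q)) :
    matrixToClifford Q A = ∑ i, ∑ j, cliffordTwist Q (A i j) *
      matrixUnits (hyperbolicLeft Q) (hyperbolicRight Q) i j := by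
  rw [matrixToClifford, matrixUnitsLift_apply]

/-- The linear map `(x, a, b) ↦ !![x, a; b, -x]`, whose values square to `Q x + a * b`. -/
def vectorMatrix : M × R × R →ₗ[R] Matrix (Fin 2) (Fin 2) (CliffordAlgebra Q) where
  toFun v := !![ι Q v.1, algebraMap R _ v.2.1; algebraMap R _ v.2.2, -ι Q v.1]
  map_add' v w := by
    simp [add_comm]
  map_smul' c v := by
    simp [Algebra.algebraMap_eq_smul_one, mul_smul]

theorem vectorMatrix_apply (v : M × R × R) :
    vectorMatrix Q v = !![ι Q v.1, algebraMap R _ v.2.1; algebraMap R _ v.2.2, -ι Q v.1] :=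
  rfl

theorem vectorMatrix_mul_self (v : M × R × R) :
    vectorMatrix Q v * vectorMatrix Q v = algebraMap R _ (prodHyperbolicPlane Q v) := by
  have comm (a : R) := Algebra.commutes a (ι Q v.1)
  rw [vectorMatrix_apply, mul_fin_two, algebraMap_eq_diagonal]
  ext i j
  fin_cases i <;> fin_cases j <;>
    simp [comm, ι_sq_scalar, ← map_mul, mul_comm, add_comm]

/-- The homomorphism induced by `vectorMatrix`. -/
def cliffordToMatrix :
    CliffordAlgebra (prodHyperbolicPlane Q) →ₐ[R] Matrix (Fin 2) (Fin 2) (CliffordAlgebra Q) :=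
  lift _ ⟨vectorMatrix Q, vectorMatrix_mul_self Q⟩

theorem cliffordToMatrix_ι (v : M × R × R) :
    cliffordToMatrix Q (ι _ v) =
      !![ι Q v.1, algebraMap R _ v.2.1; algebraMap R _ v.2.2, -ι Q v.1] :=
  lift_ι_apply ..

theorem cliffordToMatrix_hyperbolicChirality :
    cliffordToMatrix Q (hyperbolicChirality Q) = !![1, 0; 0, -1] := by
  simp [chirality, cliffordToMatrix_ι]

theorem cliffordToMatrix_matrixUnits (i j : Fin 2) :
    cliffordToMatrix Q (matrixUnits (hyperbolicLeft Q) (hyperbolicRight Q) i j) =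
      single i j 1 := by
  ext k l
  fin_cases i <;> fin_cases j <;> fin_cases k <;> fin_cases l <;>
    simp [matrixUnits, cliffordToMatrix_ι]

theorem cliffordToMatrix_cliffordTwist (a : CliffordAlgebra Q) :
    cliffordToMatrix Q (cliffordTwist Q a) = scalar (Fin 2) a := by
  suffices (cliffordToMatrix Q).comp (cliffordTwist Q) = scalarAlgHom (Fin 2) R from
    DFunLike.congr_fun this a
  ext x i j
  fin_cases i <;> fin_cases j <;>
    simp [cliffordTwist_ι, cliffordToMatrix_ι, cliffordToMatrix_hyperbolicChirality]

theorem cliffordToMatrix_matrixToClifford (A : Matrix (Fin 2) (Fin 2) (CliffordAlgebra Q)) :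
    cliffordToMatrix Q (matrixToClifford Q A) = A := by
  simp only [matrixToClifford_apply, map_sum, map_mul, cliffordToMatrix_cliffordTwist,
    cliffordToMatrix_matrixUnits, scalar_apply, ← smul_eq_diagonal_mul, smul_single, smul_eq_mul,
    mul_one]
  exact (matrix_eq_sum_single A).symm

theorem matrixToClifford_comp_cliffordToMatrix :
    (matrixToClifford Q).comp (cliffordToMatrix Q) = AlgHom.id R _ := by
  ext x
  · calc matrixToClifford Q (cliffordToMatrix Q (ι _ (x, 0)))
        = cliffordTwist Q (ι Q x) * hyperbolicChirality Q := by
          simp [cliffordToMatrix_ι, matrixToClifford_apply, matrixUnits, chirality, mul_add,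
            sub_eq_add_neg]
      _ = ι _ (x, 0) := by
          rw [cliffordTwist_ι, mul_assoc, (isHyperbolicPair_left_right Q).chirality_mul_self,
            mul_one]
  · simp [cliffordToMatrix_ι, matrixToClifford_apply, matrixUnits]
  · simp [cliffordToMatrix_ι, matrixToClifford_apply, matrixUnits]

/-- Adding a hyperbolic plane to a quadratic form replaces its Clifford algebra by the algebra of
`2 × 2` matrices over it. -/
def cliffordProdHyperbolicPlaneEquiv :
    CliffordAlgebra (prodHyperbolicPlane Q) ≃ₐ[R] Matrix (Fin 2) (Fin 2) (CliffordAlgebra Q) :=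
  .ofAlgHom (cliffordToMatrix Q) (matrixToClifford Q)
    (AlgHom.ext <| cliffordToMatrix_matrixToClifford Q) (matrixToClifford_comp_cliffordToMatrix Q)

end HyperbolicPlane

section SumSquares

/-- Splitting off the last `n` coordinates of a diagonal form. -/
def weightedSumSquaresFinAdd {R S : Type*} [CommSemiring R] [Monoid S] [DistribMulAction S R]
    [SMulCommClass S R R] {m n : ℕ} (w : Fin (m + n) → S) :
    (weightedSumSquares R w).IsometryEquiv
      ((weightedSumSquares R fun i => w (Fin.castAdd n i)).prod
        (weightedSumSquares R fun i => w (Fin.natAdd m i))) where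
  toFun v := (fun i => v (Fin.castAdd n i), fun i => v (Fin.natAdd m i))
  invFun v := Fin.append v.1 v.2
  map_add' _ _ := rfl
  map_smul' _ _ := rfl
  left_inv v := Fin.append_castAdd_natAdd
  right_inv v := by simp
  map_app' v := by simp [weightedSumSquares_apply, Fin.sum_univ_add]

variable {R : Type*} [CommRing R]

/-- The factorization `a ^ 2 + b ^ 2 = (a + i * b) * (a - i * b)` as an isometry. -/
def sumSquaresTwoEquivHyperbolicPlane [Invertible (2 : R)] {i : R} (hi : i ^ 2 = -1) :
    (weightedSumSquares R fun _ : Fin 2 => (1 : R)).IsometryEquiv (hyperbolicPlane R) where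
  toFun v := (v 0 + i * v 1, v 0 - i * v 1)
  invFun w := ![⅟2 * (w.1 + w.2), ⅟2 * i * (w.2 - w.1)]
  map_add' v w := by ext <;> simp <;> ring
  map_smul' c v := by ext <;> simp <;> ring
  left_inv v := by
    have := invOf_mul_self (2 : R)
    ext j
    fin_cases j <;> simp <;> grind
  right_inv w := by
    have := invOf_mul_self (2 : R)
    ext <;> simp <;> grind
  map_app' v := by
    simp only [weightedSumSquares_apply, hyperbolicPlane_apply, Fin.sum_univ_two, one_smul]
    grind

/-- Two additional squares form a hyperbolic plane, so they replace the Clifford algebra by `2 × 2`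
matrices over it. -/
def cliffordSumSquaresAddTwoEquiv [Invertible (2 : R)] {i : R} (hi : i ^ 2 = -1) (n : ℕ) :
    CliffordAlgebra (weightedSumSquares R fun _ : Fin (n + 2) => (1 : R)) ≃ₐ[R]
      Matrix (Fin 2) (Fin 2) (CliffordAlgebra (weightedSumSquares R fun _ : Fin n => (1 : R))) :=
  (equivOfIsometry <| (weightedSumSquaresFinAdd _).trans <|
    QuadraticMap.IsometryEquiv.prod (.refl _) (sumSquaresTwoEquivHyperbolicPlane hi)).trans
    (cliffordProdHyperbolicPlaneEquiv _)

theorem complexClifford_add_two_mul_isomorphic_matrix_general [Invertible (2 : R)] {i : R}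
    (hi : i ^ 2 = -1) (n m : ℕ) :
    Nonempty
      (CliffordAlgebra (weightedSumSquares R fun _ : Fin (n + 2 * m) => (1 : R)) ≃ₐ[R]
        Matrix (Fin (2 ^ m)) (Fin (2 ^ m))
          (CliffordAlgebra (weightedSumSquares R fun _ : Fin n => (1 : R)))) := by
  induction m with
  | zero => exact ⟨matrixFinOneAlgEquiv.symm⟩
  | succ m ih =>
    obtain ⟨e⟩ := ih
    exact ⟨(cliffordSumSquaresAddTwoEquiv hi (n + 2 * m)).trans <|
      e.mapMatrix.trans <| (compAlgEquiv _ _ _ _).trans <|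
        reindexAlgEquiv R _ <| finProdFinEquiv.trans <| finCongr (pow_succ' 2 m).symm⟩

end SumSquares

/-- `Cℂ(n+2m) ≅ M_{2^m}(Cℂ(n))`. -/
theorem complexClifford_add_two_mul_isomorphic_matrix (n m : ℕ) :
    Nonempty
      (ComplexClifford (n + 2 * m) ≃ₐ[ℂ]
        Matrix (Fin (2 ^ m)) (Fin (2 ^ m)) (ComplexClifford n)) :=
  complexClifford_add_two_mul_isomorphic_matrix_general Complex.I_sq n m
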